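/- Moment asymptotics of the Green's function second derivatives: For the Green's function G of ε²∂_x⁴ − b∂_x² + c on (0,1) with clamped boundary conditions and constant coefficients, as ε → 0 one has ∫₀¹G_{xx}(1,t)dt = ((e−1)/(e+1))ε^{−1} + O(1), ∫₀¹G_{xx}(1,t)t dt = (2/(e²−1))ε^{−1} + O(1), ∫₀¹G_{xx}(1,t)t² dt = ((e²−4e+5)/(e²−1))ε^{−1} + O(1), ∫₀¹G_{xx}(1,t)t³ dt = ((16−2e²)/(e²−1))ε^{−1} + O(1), and moreover ∫₀¹G_{xxx}(1,t)t^k dt = ε^{−1}(∫₀¹G_{xx}(1,t)t^k dt + O(1)) and ∫₀¹G_{xxx}(0,t)t^k dt = −ε^{−1}(∫₀¹G_{xx}(0,t)t^k dt + O(1)) for k ∈ {0,1,2,3}. -/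

import Mathlib

open Set

/-- `g` solves the homogeneous constant-coefficient equation
`ε²g⁗ - b g'' + c g = 0` on all of `ℝ`. -/
def GreenODE (ε b c : ℝ) (g : ℝ → ℝ) : Prop :=
  ∀ x : ℝ, ε^2 * iteratedDeriv 4 g x - b * iteratedDeriv 2 g x + c * g x = 0

/-!
Applying Green's formula on both sides of the source to a solution `y` that is clamped at the left
end gives `y t = ε² (y 1 * G_xxx(1, t) - y' 1 * G_xx(1, t))`. Two such solutions, one with a
boundary layer at the right end and one that follows `sinh (√(c / b) x)`, therefore determine
`G_xx(1, ·)` and `G_xxx(1, ·)` by Cramer's rule. The boundary layer has `L¹` norm `O(ε)`, so that in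
`L¹(0, 1)`, up to `O(ε)`, the kernel `ε G_xx(1, ·)` is a multiple of `sinh (√(c / b) t)`, and
`ε² G_xxx(1, ·)` is `√b` times that. The left end follows by the reflection `x ↦ 1 - x`.
-/

open Filter Topology Asymptotics

section Equation

variable {ε b c : ℝ}

theorem GreenODE.exp_mul {μ : ℝ} (hμ : ε ^ 2 * μ ^ 4 - b * μ ^ 2 + c = 0) :
    GreenODE ε b c (fun x => Real.exp (μ * x)) := by
  intro x
  simp only [iteratedDeriv_exp_const_mul]
  linear_combination Real.exp (μ * x) * hμ

theorem GreenODE.const_mul {g : ℝ → ℝ} (hg : GreenODE ε b c g) (a : ℝ) :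
    GreenODE ε b c (fun x => a * g x) := by
  intro x
  simp only [iteratedDeriv_const_mul_field]
  linear_combination a * hg x

theorem GreenODE.add {f g : ℝ → ℝ} (hf : GreenODE ε b c f) (hg : GreenODE ε b c g)
    (hf' : ContDiff ℝ 4 f) (hg' : ContDiff ℝ 4 g) : GreenODE ε b c (fun x => f x + g x) := by
  intro x
  have h2 := iteratedDeriv_fun_add (n := 2) (x := x)
    (hf'.of_le (by norm_num)).contDiffAt (hg'.of_le (by norm_num)).contDiffAt
  have h4 := iteratedDeriv_fun_add (n := 4) (x := x) hf'.contDiffAt hg'.contDiffAt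
  rw [h2, h4]
  linear_combination hf x + hg x

theorem GreenODE.comp_one_sub {g : ℝ → ℝ} (hg : GreenODE ε b c g) :
    GreenODE ε b c (fun x => g (1 - x)) := by
  intro x
  simpa [iteratedDeriv_comp_const_sub, Even.neg_pow (n := 4) (by decide)] using hg (1 - x)

/-- The bilinear concomitant of `L = ε²∂⁴ - b∂² + c`: the boundary expression in Green's formula
`∫ (y Lg - g Ly) = [concomitant]`. -/
noncomputable def concomitant (ε b : ℝ) (y g : ℝ → ℝ) (x : ℝ) : ℝ :=
  ε ^ 2 * (y x * iteratedDeriv 3 g x - deriv y x * iteratedDeriv 2 g x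
      + iteratedDeriv 2 y x * deriv g x - iteratedDeriv 3 y x * g x)
    - b * (y x * deriv g x - deriv y x * g x)

theorem hasDerivAt_iteratedDeriv {n : WithTop ℕ∞} {g : ℝ → ℝ} (hg : ContDiff ℝ n g) {m : ℕ}
    (hm : m < n) (x : ℝ) : HasDerivAt (iteratedDeriv m g) (iteratedDeriv (m + 1) g x) x := by
  rw [iteratedDeriv_succ]
  exact (hg.differentiable_iteratedDeriv m hm x).hasDerivAt

theorem GreenODE.concomitant_eq {y g : ℝ → ℝ} (hy : GreenODE ε b c y) (hg : GreenODE ε b c g)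
    (hy' : ContDiff ℝ 4 y) (hg' : ContDiff ℝ 4 g) (s t : ℝ) :
    concomitant ε b y g s = concomitant ε b y g t := by
  have hderiv : ∀ {f : ℝ → ℝ}, ContDiff ℝ 4 f → ∀ x,
      HasDerivAt f (deriv f x) x ∧ HasDerivAt (deriv f) (iteratedDeriv 2 f x) x ∧
      HasDerivAt (iteratedDeriv 2 f) (iteratedDeriv 3 f x) x ∧
      HasDerivAt (iteratedDeriv 3 f) (iteratedDeriv 4 f x) x := fun {f} hf x =>
    ⟨by simpa using hasDerivAt_iteratedDeriv hf (m := 0) (by norm_num) x,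
      by simpa using hasDerivAt_iteratedDeriv hf (m := 1) (by norm_num) x,
      hasDerivAt_iteratedDeriv hf (m := 2) (by norm_num) x,
      hasDerivAt_iteratedDeriv hf (m := 3) (by norm_num) x⟩
  have hconst : ∀ x, HasDerivAt (concomitant ε b y g) 0 x := by
    intro x
    obtain ⟨y₀, y₁, y₂, y₃⟩ := hderiv hy' x
    obtain ⟨g₀, g₁, g₂, g₃⟩ := hderiv hg' x
    refine (((((y₀.mul g₃).sub (y₁.mul g₂)).add (y₂.mul g₁)).sub (y₃.mul g₀)).const_mul
      (ε ^ 2) |>.sub (((y₀.mul g₁).sub (y₁.mul g₀)).const_mul b)).congr_deriv ?_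
    linear_combination y x * hg x - g x * hy x
  exact is_const_of_deriv_eq_zero (fun x => (hconst x).differentiableAt)
    (fun x => (hconst x).deriv) s t

/-- A solution of `ε²y⁗ - b y'' + c y = 0` that is clamped at the left end of the interval. -/
structure ClampedSolution (ε b c : ℝ) (y : ℝ → ℝ) : Prop where
  contDiff : ContDiff ℝ 4 y
  ode : GreenODE ε b c y
  eq_zero : y 0 = 0
  deriv_eq_zero : deriv y 0 = 0

theorem ClampedSolution.const_mul {y : ℝ → ℝ} (hy : ClampedSolution ε b c y) (a : ℝ) :
    ClampedSolution ε b c (fun x => a * y x) where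
  contDiff := contDiff_const.mul hy.contDiff
  ode := hy.ode.const_mul a
  eq_zero := by rw [hy.eq_zero, mul_zero]
  deriv_eq_zero := by rw [deriv_const_mul_field, hy.deriv_eq_zero, mul_zero]

/-- The Green's function `G(·, t)` of the clamped problem on `(0, 1)`, given by its branches `g₁` to
the left and `g₂` to the right of the source `t`, each extended to a solution on all of `ℝ`. -/
structure IsClampedGreen (ε b c t : ℝ) (g₁ g₂ : ℝ → ℝ) : Prop where
  contDiff_left : ContDiff ℝ 4 g₁
  contDiff_right : ContDiff ℝ 4 g₂
  ode_left : GreenODE ε b c g₁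
  ode_right : GreenODE ε b c g₂
  left_zero : g₁ 0 = 0
  deriv_left_zero : deriv g₁ 0 = 0
  right_one : g₂ 1 = 0
  deriv_right_one : deriv g₂ 1 = 0
  eq_source : g₁ t = g₂ t
  deriv_source : deriv g₁ t = deriv g₂ t
  iteratedDeriv_two_source : iteratedDeriv 2 g₁ t = iteratedDeriv 2 g₂ t
  jump : iteratedDeriv 3 g₂ t - iteratedDeriv 3 g₁ t = 1 / ε ^ 2

namespace IsClampedGreen

variable {t : ℝ} {g₁ g₂ : ℝ → ℝ}

theorem comp_one_sub (h : IsClampedGreen ε b c t g₁ g₂) :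
    IsClampedGreen ε b c (1 - t) (fun x => g₂ (1 - x)) (fun x => g₁ (1 - x)) where
  contDiff_left := h.contDiff_right.comp (contDiff_const.sub contDiff_id)
  contDiff_right := h.contDiff_left.comp (contDiff_const.sub contDiff_id)
  ode_left := h.ode_right.comp_one_sub
  ode_right := h.ode_left.comp_one_sub
  left_zero := by simpa using h.right_one
  deriv_left_zero := by simpa [deriv_comp_const_sub] using h.deriv_right_one
  right_one := by simpa using h.left_zero
  deriv_right_one := by simpa [deriv_comp_const_sub] using h.deriv_left_zero
  eq_source := by simpa using h.eq_source.symm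
  deriv_source := by simpa [deriv_comp_const_sub] using h.deriv_source.symm
  iteratedDeriv_two_source := by
    simpa [iteratedDeriv_comp_const_sub] using h.iteratedDeriv_two_source.symm
  jump := by
    have h3 : ∀ g : ℝ → ℝ, iteratedDeriv 3 (fun x => g (1 - x)) (1 - t) = -iteratedDeriv 3 g t :=
      fun g => by simp [iteratedDeriv_comp_const_sub, pow_succ]
    rw [h3, h3, ← h.jump]
    ring

/-- Green's formula on both sides of the source turns the jump of `g'''` into the value at the
source of any left-clamped solution. -/
theorem clampedSolution_eq (h : IsClampedGreen ε b c t g₁ g₂) (hε : ε ≠ 0) {y : ℝ → ℝ}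
    (hy : ClampedSolution ε b c y) :
    y t = ε ^ 2 * (y 1 * iteratedDeriv 3 g₂ 1 - deriv y 1 * iteratedDeriv 2 g₂ 1) := by
  have hleft := hy.ode.concomitant_eq h.ode_left hy.contDiff h.contDiff_left 0 t
  have hright := hy.ode.concomitant_eq h.ode_right hy.contDiff h.contDiff_right 1 t
  have hjump : ε ^ 2 * (iteratedDeriv 3 g₂ t - iteratedDeriv 3 g₁ t) = 1 := by
    rw [h.jump]; field_simp
  simp only [concomitant, hy.eq_zero, hy.deriv_eq_zero, h.left_zero, h.deriv_left_zero,
    h.right_one, h.deriv_right_one, h.eq_source, h.deriv_source,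
    h.iteratedDeriv_two_source] at hleft hright
  linear_combination hleft - hright - y t * hjump

end IsClampedGreen

/-- The exponential `e^{μx}` minus the combination of `e^{νx}` and `e^{-νx}` with the same value
and slope at `0`. -/
noncomputable def clampedExp (μ ν x : ℝ) : ℝ :=
  Real.exp (μ * x) - (Real.cosh (ν * x) + μ / ν * Real.sinh (ν * x))

theorem contDiff_clampedExp (μ ν : ℝ) {n : WithTop ℕ∞} : ContDiff ℝ n (clampedExp μ ν) := by
  unfold clampedExp
  fun_prop

theorem deriv_clampedExp (μ : ℝ) {ν : ℝ} (hν : ν ≠ 0) (x : ℝ) :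
    deriv (clampedExp μ ν) x =
      μ * Real.exp (μ * x) - (ν * Real.sinh (ν * x) + μ * Real.cosh (ν * x)) := by
  have hlin : ∀ a : ℝ, HasDerivAt (fun x => a * x) a x := fun a => hasDerivAt_const_mul a
  refine HasDerivAt.deriv (((hlin μ).exp.sub
    ((hlin ν).cosh.add ((hlin ν).sinh.const_mul (μ / ν)))).congr_deriv ?_)
  field_simp

theorem clampedSolution_clampedExp {μ ν : ℝ} (hμ : ε ^ 2 * μ ^ 4 - b * μ ^ 2 + c = 0)
    (hν : ε ^ 2 * ν ^ 4 - b * ν ^ 2 + c = 0) (hν₀ : ν ≠ 0) :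
    ClampedSolution ε b c (clampedExp μ ν) where
  contDiff := contDiff_clampedExp μ ν
  ode := by
    have hcombination : clampedExp μ ν = fun x => Real.exp (μ * x) +
        (-(1 + μ / ν) / 2 * Real.exp (ν * x) + -(1 - μ / ν) / 2 * Real.exp (-ν * x)) := by
      ext x
      rw [clampedExp, Real.cosh_eq, Real.sinh_eq, neg_mul]
      ring
    rw [hcombination]
    refine (GreenODE.exp_mul hμ).add (((GreenODE.exp_mul hν).const_mul _).add
      ((GreenODE.exp_mul (by rwa [even_two.neg_pow, Even.neg_pow (by decide)])).const_mul _)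
      ?_ ?_) ?_ ?_ <;> fun_prop
  eq_zero := by simp [clampedExp]
  deriv_eq_zero := by simp [deriv_clampedExp μ hν₀]

end Equation
section FirstOrder

/-- `f ε = a + O(ε)` as `ε ↓ 0`. -/
def TendstoLinearly (f : ℝ → ℝ) (a : ℝ) : Prop :=
  (fun ε => f ε - a) =O[𝓝[>] 0] fun ε => ε

namespace TendstoLinearly

variable {f g : ℝ → ℝ} {a b : ℝ}

theorem const (a : ℝ) : TendstoLinearly (fun _ => a) a := by
  simpa only [TendstoLinearly, sub_self] using isBigO_zero _ _

theorem id : TendstoLinearly (fun ε => ε) 0 := by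
  simpa only [TendstoLinearly, sub_zero] using isBigO_refl _ _

theorem tendsto (hf : TendstoLinearly f a) : Tendsto f (𝓝[>] 0) (𝓝 a) :=
  tendsto_sub_nhds_zero_iff.1 (hf.trans_tendsto (tendsto_id.mono_left nhdsWithin_le_nhds))

theorem congr' (hf : TendstoLinearly f a) (hfg : f =ᶠ[𝓝[>] 0] g) : TendstoLinearly g a :=
  IsBigO.congr' hf (hfg.sub .rfl) .rfl

theorem of_abs_sub_le (hg : TendstoLinearly g 0) (hfg : ∀ᶠ ε in 𝓝[>] 0, |f ε - a| ≤ g ε) :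
    TendstoLinearly f a := by
  have hg' : g =O[𝓝[>] 0] fun ε => ε := by simpa only [TendstoLinearly, sub_zero] using hg
  exact (IsBigO.of_norm_eventuallyLE (f := fun ε => f ε - a) hfg).trans hg'

theorem abs_sub (hf : TendstoLinearly f a) : TendstoLinearly (fun ε => |f ε - a|) 0 := by
  simpa only [TendstoLinearly, sub_zero] using hf.abs_left

theorem add (hf : TendstoLinearly f a) (hg : TendstoLinearly g b) :
    TendstoLinearly (fun ε => f ε + g ε) (a + b) :=
  (IsBigO.add hf hg).congr_left fun _ => by ring

theorem mul (hf : TendstoLinearly f a) (hg : TendstoLinearly g b) :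
    TendstoLinearly (fun ε => f ε * g ε) (a * b) := by
  have hfirst : (fun ε => (f ε - a) * g ε) =O[𝓝[>] 0] fun ε => ε := by
    simpa only [mul_one] using IsBigO.mul hf (hg.tendsto.isBigO_one ℝ)
  exact (hfirst.add (IsBigO.const_mul_left hg a)).congr_left fun _ => by ring

theorem sub (hf : TendstoLinearly f a) (hg : TendstoLinearly g b) :
    TendstoLinearly (fun ε => f ε - g ε) (a - b) :=
  (IsBigO.sub hf hg).congr_left fun _ => by ring

theorem comp {φ : ℝ → ℝ} (hφ : DifferentiableAt ℝ φ a) (hf : TendstoLinearly f a) :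
    TendstoLinearly (fun ε => φ (f ε)) (φ a) :=
  (hφ.isBigO_sub.comp_tendsto hf.tendsto).trans hf

theorem inv (hf : TendstoLinearly f a) (ha : a ≠ 0) :
    TendstoLinearly (fun ε => (f ε)⁻¹) a⁻¹ :=
  hf.comp (differentiableAt_inv ha)

theorem div (hf : TendstoLinearly f a) (hg : TendstoLinearly g b) (hb : b ≠ 0) :
    TendstoLinearly (fun ε => f ε / g ε) (a / b) := by
  simpa only [div_eq_mul_inv] using hf.mul (hg.inv hb)

theorem exists_eventually_abs_sub_le (hf : TendstoLinearly f a) :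
    ∃ C > 0, ∀ᶠ ε in 𝓝[>] 0, |f ε - a| ≤ C * ε := by
  obtain ⟨C, hC, hbound⟩ := IsBigO.exists_pos hf
  refine ⟨C, hC, ?_⟩
  filter_upwards [hbound.bound, self_mem_nhdsWithin] with ε hε (hpos : 0 < ε)
  simpa only [Real.norm_eq_abs, abs_of_pos hpos] using hε

end TendstoLinearly

end FirstOrder

section Rates

variable {b c ε : ℝ}

/-- The larger root `R` of `R² - bR + cε² = 0`, i.e. `R = ε²μ₁²` for the fast characteristic
root `μ₁`; it tends to `b` as `ε → 0`. -/
noncomputable def dominantRoot (b c ε : ℝ) : ℝ :=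
  (b + √(b ^ 2 - 4 * c * ε ^ 2)) / 2

/-- The characteristic root `μ₁ ~ √b / ε`. -/
noncomputable def fastRate (b c ε : ℝ) : ℝ :=
  √(dominantRoot b c ε) / ε

/-- The characteristic root `μ₂ ~ √(c / b)`. -/
noncomputable def slowRate (b c ε : ℝ) : ℝ :=
  √(c / dominantRoot b c ε)

theorem dominantRoot_zero (hb : 0 < b) : dominantRoot b c 0 = b := by
  simp [dominantRoot, Real.sqrt_sq hb.le]

theorem dominantRoot_pos (hb : 0 < b) : 0 < dominantRoot b c ε := by
  unfold dominantRoot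
  positivity

theorem dominantRoot_quadratic (h : 4 * c * ε ^ 2 ≤ b ^ 2) :
    dominantRoot b c ε ^ 2 - b * dominantRoot b c ε + c * ε ^ 2 = 0 := by
  unfold dominantRoot
  linear_combination Real.sq_sqrt (sub_nonneg.2 h) / 4

theorem fastRate_char (hb : 0 < b) (hε : ε ≠ 0) (h : 4 * c * ε ^ 2 ≤ b ^ 2) :
    ε ^ 2 * fastRate b c ε ^ 4 - b * fastRate b c ε ^ 2 + c = 0 := by
  have hsq : fastRate b c ε ^ 2 = dominantRoot b c ε / ε ^ 2 := by
    rw [fastRate, div_pow, Real.sq_sqrt (dominantRoot_pos hb).le]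
  rw [show fastRate b c ε ^ 4 = (fastRate b c ε ^ 2) ^ 2 by ring, hsq]
  field_simp
  linear_combination dominantRoot_quadratic h

theorem slowRate_char (hb : 0 < b) (hc : 0 ≤ c) (h : 4 * c * ε ^ 2 ≤ b ^ 2) :
    ε ^ 2 * slowRate b c ε ^ 4 - b * slowRate b c ε ^ 2 + c = 0 := by
  have hR : 0 < dominantRoot b c ε := dominantRoot_pos hb
  have hsq : slowRate b c ε ^ 2 = c / dominantRoot b c ε := Real.sq_sqrt (by positivity)
  rw [show slowRate b c ε ^ 4 = (slowRate b c ε ^ 2) ^ 2 by ring, hsq]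
  field_simp
  linear_combination c * dominantRoot_quadratic h

theorem fastRate_pos (hb : 0 < b) (hε : 0 < ε) : 0 < fastRate b c ε :=
  div_pos (Real.sqrt_pos.2 (dominantRoot_pos hb)) hε

theorem slowRate_pos (hb : 0 < b) (hc : 0 < c) : 0 < slowRate b c ε :=
  Real.sqrt_pos.2 (div_pos hc (dominantRoot_pos hb))

theorem eventually_four_mul_sq_le (hb : 0 < b) :
    ∀ᶠ ε in 𝓝[>] (0 : ℝ), 4 * c * ε ^ 2 ≤ b ^ 2 := by
  have hlim : Tendsto (fun ε : ℝ => 4 * c * ε ^ 2) (𝓝[>] 0) (𝓝 0) := by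
    have hcont : Continuous fun ε : ℝ => 4 * c * ε ^ 2 := by fun_prop
    simpa using (hcont.tendsto 0).mono_left nhdsWithin_le_nhds
  exact hlim.eventually_le_const (by positivity)

theorem tendstoLinearly_dominantRoot (hb : 0 < b) : TendstoLinearly (dominantRoot b c) b := by
  have hdiff : DifferentiableAt ℝ (dominantRoot b c) 0 := by
    have hdisc : DifferentiableAt ℝ (fun ε : ℝ => b ^ 2 - 4 * c * ε ^ 2) 0 := by fun_prop
    exact ((hdisc.sqrt (by simpa using hb.ne')).const_add b).div_const 2
  simpa only [dominantRoot_zero hb] using TendstoLinearly.id.comp hdiff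

theorem tendstoLinearly_sqrt_dominantRoot (hb : 0 < b) :
    TendstoLinearly (fun ε => √(dominantRoot b c ε)) (√b) :=
  (tendstoLinearly_dominantRoot hb).comp (Real.hasDerivAt_sqrt hb.ne').differentiableAt

theorem tendstoLinearly_slowRate (hb : 0 < b) (hc : 0 < c) :
    TendstoLinearly (slowRate b c) √(c / b) :=
  ((TendstoLinearly.const c).div (tendstoLinearly_dominantRoot hb) hb.ne').comp
    (Real.hasDerivAt_sqrt (div_pos hc hb).ne').differentiableAt

theorem tendstoLinearly_mul_fastRate (hb : 0 < b) :
    TendstoLinearly (fun ε => ε * fastRate b c ε) √b := by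
  refine (tendstoLinearly_sqrt_dominantRoot (c := c) hb).congr' ?_
  filter_upwards [self_mem_nhdsWithin] with ε (hε : 0 < ε)
  rw [fastRate, mul_div_cancel₀ _ hε.ne']

theorem tendstoLinearly_inv_fastRate (hb : 0 < b) :
    TendstoLinearly (fun ε => (fastRate b c ε)⁻¹) 0 := by
  simpa only [fastRate, inv_div, zero_div] using
    TendstoLinearly.id.div (tendstoLinearly_sqrt_dominantRoot hb) (Real.sqrt_pos.2 hb).ne'

theorem tendstoLinearly_exp_neg_fastRate (hb : 0 < b) :
    TendstoLinearly (fun ε => Real.exp (-fastRate b c ε)) 0 := by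
  refine (tendstoLinearly_inv_fastRate (c := c) hb).of_abs_sub_le ?_
  filter_upwards [self_mem_nhdsWithin] with ε hε
  have hp : 0 < fastRate b c ε := fastRate_pos hb hε
  rw [sub_zero, Real.abs_exp, Real.exp_neg]
  gcongr
  linarith [Real.add_one_le_exp (fastRate b c ε)]

theorem tendstoLinearly_fastRate_mul_exp_neg (hb : 0 < b) :
    TendstoLinearly (fun ε => fastRate b c ε * Real.exp (-fastRate b c ε)) 0 := by
  have hbound : TendstoLinearly (fun ε => 2 * (fastRate b c ε)⁻¹) 0 := by
    simpa only [mul_zero] using (TendstoLinearly.const 2).mul (tendstoLinearly_inv_fastRate hb)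
  refine hbound.of_abs_sub_le ?_
  filter_upwards [self_mem_nhdsWithin] with ε hε
  have hp : 0 < fastRate b c ε := fastRate_pos hb hε
  rw [sub_zero, abs_of_pos (by positivity), Real.exp_neg, ← div_eq_mul_inv, ← div_eq_mul_inv,
    div_le_div_iff₀ (Real.exp_pos _) hp]
  nlinarith [Real.quadratic_le_exp_of_nonneg hp.le]

end Rates

section Profiles

open intervalIntegral

/-- `f ε → f₀` in `L¹(0, 1)` with error `O(ε)` as `ε ↓ 0`, for continuous functions. -/
structure TendstoLinearlyL1 (f : ℝ → ℝ → ℝ) (f₀ : ℝ → ℝ) : Prop where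
  continuous : ∀ ε, Continuous (f ε)
  continuous_limit : Continuous f₀
  integral_abs_sub : TendstoLinearly (fun ε => ∫ t in (0 : ℝ)..1, |f ε t - f₀ t|) 0

/-- A test weight on `(0, 1)`: integrable and bounded by `1`. -/
structure IsUnitWeight (φ : ℝ → ℝ) : Prop where
  intervalIntegrable : IntervalIntegrable φ MeasureTheory.volume 0 1
  abs_le_one : ∀ t ∈ Icc (0 : ℝ) 1, |φ t| ≤ 1

theorem IsUnitWeight.comp_one_sub {φ : ℝ → ℝ} (hφ : IsUnitWeight φ) :
    IsUnitWeight (fun t => φ (1 - t)) where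
  intervalIntegrable := by simpa using (hφ.intervalIntegrable.comp_sub_left 1).symm
  abs_le_one t ht := hφ.abs_le_one _ ⟨sub_nonneg.2 ht.2, sub_le_self 1 ht.1⟩

theorem isUnitWeight_pow (k : ℕ) : IsUnitWeight (fun t => t ^ k) where
  intervalIntegrable := (continuous_pow k).intervalIntegrable 0 1
  abs_le_one t ht := by
    rw [abs_of_nonneg (pow_nonneg ht.1 k)]
    exact pow_le_one₀ ht.1 ht.2

theorem IsUnitWeight.abs_integral_mul_le {φ h : ℝ → ℝ} (hφ : IsUnitWeight φ) (hh : Continuous h) :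
    |∫ t in (0 : ℝ)..1, h t * φ t| ≤ ∫ t in (0 : ℝ)..1, |h t| := by
  have hle : ∀ t ∈ Ioc (0 : ℝ) 1, ‖h t * φ t‖ ≤ |h t| := fun t ht => by
    rw [norm_mul, Real.norm_eq_abs, Real.norm_eq_abs]
    exact mul_le_of_le_one_right (abs_nonneg _) (hφ.abs_le_one t (Ioc_subset_Icc_self ht))
  exact norm_integral_le_of_norm_le zero_le_one (MeasureTheory.ae_of_all _ hle)
    (hh.abs.intervalIntegrable 0 1)

namespace TendstoLinearlyL1

variable {f g : ℝ → ℝ → ℝ} {f₀ g₀ : ℝ → ℝ}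

theorem of_abs_sub_le {h : ℝ → ℝ → ℝ} (hf : ∀ ε, Continuous (f ε)) (hf₀ : Continuous f₀)
    (hh : ∀ ε, Continuous (h ε)) (hlim : TendstoLinearly (fun ε => ∫ t in (0 : ℝ)..1, h ε t) 0)
    (hle : ∀ᶠ ε in 𝓝[>] 0, ∀ t ∈ Icc (0 : ℝ) 1, |f ε t - f₀ t| ≤ h ε t) :
    TendstoLinearlyL1 f f₀ where
  continuous := hf
  continuous_limit := hf₀
  integral_abs_sub := by
    refine hlim.of_abs_sub_le ?_
    filter_upwards [hle] with ε hε
    rw [sub_zero, abs_of_nonneg (integral_nonneg zero_le_one fun t _ => abs_nonneg _)]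
    exact integral_mono_on zero_le_one (((hf ε).sub hf₀).abs.intervalIntegrable 0 1)
      ((hh ε).intervalIntegrable 0 1) hε

theorem congr_limit (hf : TendstoLinearlyL1 f f₀) (h : ∀ t, f₀ t = g₀ t) :
    TendstoLinearlyL1 f g₀ :=
  funext h ▸ hf

theorem const_mul (hf : TendstoLinearlyL1 f f₀) {α : ℝ → ℝ} {a : ℝ} (hα : TendstoLinearly α a) :
    TendstoLinearlyL1 (fun ε t => α ε * f ε t) (fun t => a * f₀ t) := by
  have hdiff : ∀ ε, Continuous fun t => |f ε t - f₀ t| :=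
    fun ε => ((hf.continuous ε).sub hf.continuous_limit).abs
  have hlimit : Continuous fun t => |f₀ t| := hf.continuous_limit.abs
  refine of_abs_sub_le
    (h := fun ε t => (|α ε - a| + |a|) * |f ε t - f₀ t| + |α ε - a| * |f₀ t|)
    (fun ε => (hf.continuous ε).const_mul _) (hf.continuous_limit.const_mul _)
    (fun ε => ((hdiff ε).const_mul _).add (hlimit.const_mul _)) ?_
    (.of_forall fun ε t _ => ?_)
  · have hint : ∀ ε, ∫ t in (0 : ℝ)..1,
        ((|α ε - a| + |a|) * |f ε t - f₀ t| + |α ε - a| * |f₀ t|) =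
          (|α ε - a| + |a|) * (∫ t in (0 : ℝ)..1, |f ε t - f₀ t|) +
            |α ε - a| * ∫ t in (0 : ℝ)..1, |f₀ t| := fun ε => by
      rw [integral_add (((hdiff ε).intervalIntegrable 0 1).const_mul _)
        ((hlimit.intervalIntegrable 0 1).const_mul _), integral_const_mul, integral_const_mul]
    simp only [hint]
    simpa only [mul_zero, zero_mul, add_zero] using
      ((hα.abs_sub.add (.const |a|)).mul hf.integral_abs_sub).add (hα.abs_sub.mul (.const _))
  · calc |α ε * f ε t - a * f₀ t|
        = |((α ε - a) + a) * (f ε t - f₀ t) + (α ε - a) * f₀ t| := by congr 1; ring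
      _ ≤ |(α ε - a) + a| * |f ε t - f₀ t| + |α ε - a| * |f₀ t| := by
          rw [← abs_mul, ← abs_mul]; exact abs_add_le _ _
      _ ≤ (|α ε - a| + |a|) * |f ε t - f₀ t| + |α ε - a| * |f₀ t| := by
          gcongr; exact abs_add_le _ _

theorem sub (hf : TendstoLinearlyL1 f f₀) (hg : TendstoLinearlyL1 g g₀) :
    TendstoLinearlyL1 (fun ε t => f ε t - g ε t) (fun t => f₀ t - g₀ t) := by
  have hf' : ∀ ε, Continuous fun t => |f ε t - f₀ t| :=
    fun ε => ((hf.continuous ε).sub hf.continuous_limit).abs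
  have hg' : ∀ ε, Continuous fun t => |g ε t - g₀ t| :=
    fun ε => ((hg.continuous ε).sub hg.continuous_limit).abs
  refine of_abs_sub_le (fun ε => (hf.continuous ε).sub (hg.continuous ε))
    (hf.continuous_limit.sub hg.continuous_limit) (fun ε => (hf' ε).add (hg' ε)) ?_
    (.of_forall fun ε t _ => ?_)
  · have hsum := hf.integral_abs_sub.add hg.integral_abs_sub
    simp only [add_zero] at hsum
    exact hsum.congr' (.of_forall fun ε => (integral_add ((hf' ε).intervalIntegrable 0 1)
      ((hg' ε).intervalIntegrable 0 1)).symm)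
  · rw [sub_sub_sub_comm]
    exact abs_sub _ _

theorem exists_forall_abs_integral_sub_le (hf : TendstoLinearlyL1 f f₀) :
    ∃ C > 0, ∀ᶠ ε in 𝓝[>] 0, ∀ φ, IsUnitWeight φ →
      |(∫ t in (0 : ℝ)..1, f ε t * φ t) - ∫ t in (0 : ℝ)..1, f₀ t * φ t| ≤ C * ε := by
  obtain ⟨C, hC, hbound⟩ := hf.integral_abs_sub.exists_eventually_abs_sub_le
  refine ⟨C, hC, hbound.mono fun ε hε φ hφ => ?_⟩
  have hmul : ∀ {h : ℝ → ℝ}, Continuous h →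
      IntervalIntegrable (fun t => h t * φ t) MeasureTheory.volume 0 1 :=
    fun hh => hφ.intervalIntegrable.continuousOn_mul hh.continuousOn
  rw [← integral_sub (hmul (hf.continuous ε)) (hmul hf.continuous_limit)]
  simp only [← sub_mul]
  calc |∫ t in (0 : ℝ)..1, (f ε t - f₀ t) * φ t|
      ≤ ∫ t in (0 : ℝ)..1, |f ε t - f₀ t| :=
        hφ.abs_integral_mul_le ((hf.continuous ε).sub hf.continuous_limit)
    _ ≤ |(∫ t in (0 : ℝ)..1, |f ε t - f₀ t|) - 0| := by rw [sub_zero]; exact le_abs_self _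
    _ ≤ C * ε := hε

end TendstoLinearlyL1

end Profiles

section Kernels

variable {b c ε : ℝ}

/-- The left-clamped solution that grows like the boundary layer `e^{-μ₁(1-x)}` at `1`. -/
noncomputable def layerSolution (b c ε x : ℝ) : ℝ :=
  Real.exp (-fastRate b c ε) * clampedExp (fastRate b c ε) (slowRate b c ε) x

/-- The left-clamped solution that follows `sinh (μ₂ x) / μ₂` away from the layer at `0`. -/
noncomputable def outerSolution (b c ε x : ℝ) : ℝ :=
  (fastRate b c ε)⁻¹ * clampedExp (-fastRate b c ε) (slowRate b c ε) x

theorem clampedSolution_layerSolution (hb : 0 < b) (hc : 0 < c) (hε : ε ≠ 0)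
    (h : 4 * c * ε ^ 2 ≤ b ^ 2) : ClampedSolution ε b c (layerSolution b c ε) :=
  (clampedSolution_clampedExp (fastRate_char hb hε h) (slowRate_char hb hc.le h)
    (slowRate_pos hb hc).ne').const_mul _

theorem clampedSolution_outerSolution (hb : 0 < b) (hc : 0 < c) (hε : ε ≠ 0)
    (h : 4 * c * ε ^ 2 ≤ b ^ 2) : ClampedSolution ε b c (outerSolution b c ε) := by
  refine (clampedSolution_clampedExp ?_ (slowRate_char hb hc.le h)
    (slowRate_pos hb hc).ne').const_mul _
  rw [even_two.neg_pow, Even.neg_pow (by decide)]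
  exact fastRate_char hb hε h

theorem continuous_layerSolution (b c ε : ℝ) : Continuous (layerSolution b c ε) :=
  (contDiff_clampedExp _ _ (n := 0)).continuous.const_mul _

theorem continuous_outerSolution (b c ε : ℝ) : Continuous (outerSolution b c ε) :=
  (contDiff_clampedExp _ _ (n := 0)).continuous.const_mul _

theorem layerSolution_eq (b c ε x : ℝ) :
    layerSolution b c ε x = Real.exp (-(fastRate b c ε * (1 - x))) -
      Real.exp (-fastRate b c ε) * (Real.cosh (slowRate b c ε * x) +
        fastRate b c ε / slowRate b c ε * Real.sinh (slowRate b c ε * x)) := by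
  rw [layerSolution, clampedExp, mul_sub, ← Real.exp_add]
  ring_nf

theorem outerSolution_eq (hb : 0 < b) (hε : 0 < ε) (x : ℝ) :
    outerSolution b c ε x =
      (fastRate b c ε)⁻¹ * (Real.exp (-(fastRate b c ε * x)) - Real.cosh (slowRate b c ε * x)) +
        Real.sinh (slowRate b c ε * x) / slowRate b c ε := by
  have hp : fastRate b c ε ≠ 0 := (fastRate_pos hb hε).ne'
  rw [outerSolution, clampedExp, neg_mul]
  field_simp
  ring

theorem deriv_layerSolution_one (hb : 0 < b) (hc : 0 < c) :
    deriv (layerSolution b c ε) 1 = Real.exp (-fastRate b c ε) *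
      (fastRate b c ε * Real.exp (fastRate b c ε) -
        (slowRate b c ε * Real.sinh (slowRate b c ε) +
          fastRate b c ε * Real.cosh (slowRate b c ε))) := by
  unfold layerSolution
  rw [deriv_const_mul_field, deriv_clampedExp _ (slowRate_pos hb hc).ne']
  simp only [mul_one]

theorem deriv_outerSolution_one (hb : 0 < b) (hc : 0 < c) :
    deriv (outerSolution b c ε) 1 = (fastRate b c ε)⁻¹ *
      (-fastRate b c ε * Real.exp (-fastRate b c ε) -
        (slowRate b c ε * Real.sinh (slowRate b c ε) +
          -fastRate b c ε * Real.cosh (slowRate b c ε))) := by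
  unfold outerSolution
  rw [deriv_const_mul_field, deriv_clampedExp _ (slowRate_pos hb hc).ne']
  simp only [mul_one]

theorem tendstoLinearly_cosh_slowRate (hb : 0 < b) (hc : 0 < c) :
    TendstoLinearly (fun ε => Real.cosh (slowRate b c ε)) (Real.cosh √(c / b)) :=
  (tendstoLinearly_slowRate hb hc).comp Real.differentiable_cosh.differentiableAt

theorem tendstoLinearly_sinh_slowRate (hb : 0 < b) (hc : 0 < c) :
    TendstoLinearly (fun ε => Real.sinh (slowRate b c ε)) (Real.sinh √(c / b)) :=
  (tendstoLinearly_slowRate hb hc).comp Real.differentiable_sinh.differentiableAt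

theorem tendstoLinearly_sinh_div_slowRate (hb : 0 < b) (hc : 0 < c) :
    TendstoLinearly (fun ε => Real.sinh (slowRate b c ε) / slowRate b c ε)
      (Real.sinh √(c / b) / √(c / b)) :=
  (tendstoLinearly_sinh_slowRate hb hc).div (tendstoLinearly_slowRate hb hc)
    (Real.sqrt_pos.2 (div_pos hc hb)).ne'

theorem tendstoLinearly_layerSolution_one (hb : 0 < b) (hc : 0 < c) :
    TendstoLinearly (fun ε => layerSolution b c ε 1) 1 := by
  have hlim := (TendstoLinearly.const 1).sub
    (((tendstoLinearly_exp_neg_fastRate (c := c) hb).mul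
      (tendstoLinearly_cosh_slowRate hb hc)).add
      ((tendstoLinearly_fastRate_mul_exp_neg (c := c) hb).mul
        (tendstoLinearly_sinh_div_slowRate hb hc)))
  simp only [zero_mul, add_zero, sub_zero] at hlim
  refine hlim.congr' (.of_forall fun ε => ?_)
  simp only [layerSolution_eq, sub_self, mul_zero, neg_zero, Real.exp_zero, mul_one]
  ring

theorem tendstoLinearly_deriv_layerSolution_one (hb : 0 < b) (hc : 0 < c) :
    TendstoLinearly (fun ε => ε * deriv (layerSolution b c ε) 1) √b := by
  have hlim := (tendstoLinearly_mul_fastRate (c := c) hb).sub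
    ((TendstoLinearly.id.mul ((tendstoLinearly_exp_neg_fastRate (c := c) hb).mul
      ((tendstoLinearly_slowRate hb hc).mul (tendstoLinearly_sinh_slowRate hb hc)))).add
      (TendstoLinearly.id.mul ((tendstoLinearly_fastRate_mul_exp_neg (c := c) hb).mul
        (tendstoLinearly_cosh_slowRate hb hc))))
  simp only [zero_mul, add_zero, sub_zero] at hlim
  refine hlim.congr' (.of_forall fun ε => ?_)
  have hexp : Real.exp (-fastRate b c ε) * Real.exp (fastRate b c ε) = 1 := by
    rw [← Real.exp_add, neg_add_cancel, Real.exp_zero]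
  simp only [deriv_layerSolution_one hb hc]
  linear_combination -ε * fastRate b c ε * hexp

theorem tendstoLinearly_outerSolution_one (hb : 0 < b) (hc : 0 < c) :
    TendstoLinearly (fun ε => outerSolution b c ε 1) (Real.sinh √(c / b) / √(c / b)) := by
  have hlim := ((tendstoLinearly_inv_fastRate (c := c) hb).mul
    ((tendstoLinearly_exp_neg_fastRate (c := c) hb).sub
      (tendstoLinearly_cosh_slowRate hb hc))).add (tendstoLinearly_sinh_div_slowRate hb hc)
  simp only [zero_mul, zero_add] at hlim
  refine hlim.congr' ?_
  filter_upwards [self_mem_nhdsWithin] with ε hε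
  simp only [outerSolution_eq hb hε, mul_one]

theorem tendstoLinearly_deriv_outerSolution_one (hb : 0 < b) (hc : 0 < c) :
    TendstoLinearly (fun ε => deriv (outerSolution b c ε) 1) (Real.cosh √(c / b)) := by
  have hlim := ((tendstoLinearly_cosh_slowRate hb hc).sub
    (tendstoLinearly_exp_neg_fastRate (c := c) hb)).sub
    (((tendstoLinearly_slowRate hb hc).mul (tendstoLinearly_sinh_slowRate hb hc)).mul
      (tendstoLinearly_inv_fastRate (c := c) hb))
  simp only [mul_zero, sub_zero] at hlim
  refine hlim.congr' ?_
  filter_upwards [self_mem_nhdsWithin] with ε hε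
  have hp : fastRate b c ε ≠ 0 := (fastRate_pos hb hε).ne'
  simp only [deriv_outerSolution_one hb hc]
  field_simp
  ring

/-- `ε` times the Wronskian of the outer and the layer solution at the right end. -/
noncomputable def endWronskian (b c ε : ℝ) : ℝ :=
  ε * deriv (layerSolution b c ε) 1 * outerSolution b c ε 1 -
    layerSolution b c ε 1 * (ε * deriv (outerSolution b c ε) 1)

theorem tendstoLinearly_endWronskian (hb : 0 < b) (hc : 0 < c) :
    TendstoLinearly (endWronskian b c) (√b * (Real.sinh √(c / b) / √(c / b))) := by
  have hlim := ((tendstoLinearly_deriv_layerSolution_one hb hc).mul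
    (tendstoLinearly_outerSolution_one hb hc)).sub
    ((tendstoLinearly_layerSolution_one hb hc).mul
      (TendstoLinearly.id.mul (tendstoLinearly_deriv_outerSolution_one hb hc)))
  simp only [zero_mul, mul_zero, sub_zero] at hlim
  exact hlim

theorem endWronskian_limit_pos (hb : 0 < b) (hc : 0 < c) :
    0 < √b * (Real.sinh √(c / b) / √(c / b)) := by
  have hκ : 0 < √(c / b) := Real.sqrt_pos.2 (div_pos hc hb)
  exact mul_pos (Real.sqrt_pos.2 hb) (div_pos (Real.sinh_pos_iff.2 hκ) hκ)

/-- The value of `ε G_{xx}(1, t)`. -/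
noncomputable def bendingKernel (b c ε t : ℝ) : ℝ :=
  layerSolution b c ε 1 / endWronskian b c ε * outerSolution b c ε t -
    outerSolution b c ε 1 / endWronskian b c ε * layerSolution b c ε t

/-- The value of `ε² G_{xxx}(1, t)`. -/
noncomputable def shearKernel (b c ε t : ℝ) : ℝ :=
  ε * deriv (layerSolution b c ε) 1 / endWronskian b c ε * outerSolution b c ε t -
    ε * deriv (outerSolution b c ε) 1 / endWronskian b c ε * layerSolution b c ε t

theorem IsClampedGreen.mul_iteratedDeriv_eq_kernels {t : ℝ} {g₁ g₂ : ℝ → ℝ}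
    (hG : IsClampedGreen ε b c t g₁ g₂) (hb : 0 < b) (hc : 0 < c) (hε : ε ≠ 0)
    (h : 4 * c * ε ^ 2 ≤ b ^ 2) (hW : endWronskian b c ε ≠ 0) :
    ε * iteratedDeriv 2 g₂ 1 = bendingKernel b c ε t ∧
      ε ^ 2 * iteratedDeriv 3 g₂ 1 = shearKernel b c ε t := by
  have hlayer := hG.clampedSolution_eq hε (clampedSolution_layerSolution hb hc hε h)
  have houter := hG.clampedSolution_eq hε (clampedSolution_outerSolution hb hc hε h)
  constructor
  · rw [bendingKernel, div_mul_eq_mul_div, div_mul_eq_mul_div, ← sub_div, eq_div_iff hW,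
      hlayer, houter, endWronskian]
    ring
  · rw [shearKernel, div_mul_eq_mul_div, div_mul_eq_mul_div, ← sub_div, eq_div_iff hW,
      hlayer, houter, endWronskian]
    ring

theorem mul_integral_iteratedDeriv_eq_kernels {g₁ g₂ : ℝ → ℝ → ℝ}
    (hG : ∀ t ∈ Ioo 0 1, IsClampedGreen ε b c t (g₁ t) (g₂ t)) (hb : 0 < b) (hc : 0 < c)
    (hε : ε ≠ 0) (h : 4 * c * ε ^ 2 ≤ b ^ 2) (hW : endWronskian b c ε ≠ 0) (φ : ℝ → ℝ) :
    ε * (∫ t in (0 : ℝ)..1, iteratedDeriv 2 (g₂ t) 1 * φ t) =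
        ∫ t in (0 : ℝ)..1, bendingKernel b c ε t * φ t ∧
      ε ^ 2 * (∫ t in (0 : ℝ)..1, iteratedDeriv 3 (g₂ t) 1 * φ t) =
        ∫ t in (0 : ℝ)..1, shearKernel b c ε t * φ t := by
  have hkernels := fun t ht => (hG t ht).mul_iteratedDeriv_eq_kernels hb hc hε h hW
  simp only [← intervalIntegral.integral_const_mul, ← mul_assoc]
  constructor <;> refine intervalIntegral.integral_congr_Ioo_of_le zero_le_one fun t ht => ?_
  · rw [(hkernels t ht).1]
  · rw [(hkernels t ht).2]

end Kernels

section Limits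

open intervalIntegral

variable {b c ε : ℝ}

theorem abs_sinh_mul_div_sub_le {α β t : ℝ} (hα : 0 < α) (hβ : 0 < β) (ht : t ∈ Icc (0 : ℝ) 1) :
    |Real.sinh (α * t) / α - Real.sinh (β * t) / β| ≤
      |Real.sinh α / α - Real.sinh β / β| := by
  wlog hαβ : β ≤ α generalizing α β
  · rw [abs_sub_comm, abs_sub_comm (Real.sinh α / α)]
    exact this hβ hα (le_of_not_ge hαβ)
  have hderiv : ∀ γ : ℝ, γ ≠ 0 → ∀ x,
      HasDerivAt (fun x => Real.sinh (γ * x) / γ) (Real.cosh (γ * x)) x := fun γ hγ x => by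
    simpa [hγ] using ((hasDerivAt_const_mul γ).sinh (x := x)).div_const γ
  have hmono : Monotone fun x => Real.sinh (α * x) / α - Real.sinh (β * x) / β := by
    refine monotone_of_hasDerivAt_nonneg
      (fun x => (hderiv α hα.ne' x).sub (hderiv β hβ.ne' x)) fun x => sub_nonneg.2 ?_
    rw [Real.cosh_le_cosh, abs_mul, abs_mul, abs_of_pos hα, abs_of_pos hβ]
    gcongr
  have hnonneg := hmono ht.1
  have hle := hmono ht.2
  simp only [mul_zero, Real.sinh_zero, zero_div, sub_zero, mul_one] at hnonneg hle
  rw [abs_of_nonneg hnonneg]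
  exact hle.trans (le_abs_self _)

theorem tendstoLinearly_integral_exp_layer (hb : 0 < b) :
    TendstoLinearly
      (fun ε => ∫ t in (0 : ℝ)..1, Real.exp (-(fastRate b c ε * (1 - t)))) 0 := by
  have hlim := (tendstoLinearly_inv_fastRate (c := c) hb).mul
    ((TendstoLinearly.const 1).sub (tendstoLinearly_exp_neg_fastRate (c := c) hb))
  simp only [zero_mul] at hlim
  refine hlim.congr' ?_
  filter_upwards [self_mem_nhdsWithin] with ε hε
  have hp : fastRate b c ε ≠ 0 := (fastRate_pos hb hε).ne'
  have hprimitive : ∀ t, HasDerivAt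
      (fun t => (fastRate b c ε)⁻¹ * Real.exp (-(fastRate b c ε * (1 - t))))
      (Real.exp (-(fastRate b c ε * (1 - t)))) t := fun t => by
    refine ((((hasDerivAt_id' t).const_sub 1).const_mul (fastRate b c ε)).fun_neg.exp.const_mul
      _).congr_deriv ?_
    field_simp
  rw [integral_eq_sub_of_hasDerivAt (fun t _ => hprimitive t)
    (Continuous.intervalIntegrable (by fun_prop) 0 1)]
  simp [mul_sub]

theorem abs_layerSolution_le (hb : 0 < b) (hc : 0 < c) (hε : 0 < ε) {t : ℝ}
    (ht : t ∈ Icc (0 : ℝ) 1) :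
    |layerSolution b c ε t| ≤
      Real.exp (-(fastRate b c ε * (1 - t))) + (1 - layerSolution b c ε 1) := by
  have hp : 0 < fastRate b c ε := fastRate_pos hb hε
  have hq : 0 < slowRate b c ε := slowRate_pos hb hc
  have hqt : 0 ≤ slowRate b c ε * t := mul_nonneg hq.le ht.1
  have : 0 ≤ Real.sinh (slowRate b c ε * t) := Real.sinh_nonneg_iff.2 hqt
  have hle : slowRate b c ε * t ≤ slowRate b c ε * 1 := by gcongr; exact ht.2
  simp only [layerSolution_eq, sub_self, mul_zero, neg_zero, Real.exp_zero, sub_sub_cancel]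
  refine (abs_sub _ _).trans (add_le_add (Real.abs_exp _).le ?_)
  rw [abs_of_nonneg (by positivity)]
  gcongr
  · exact Real.cosh_le_cosh.2 (abs_le_abs_of_nonneg hqt hle)
  · exact Real.sinh_le_sinh.2 hle

theorem tendstoLinearlyL1_layerSolution (hb : 0 < b) (hc : 0 < c) :
    TendstoLinearlyL1 (layerSolution b c) (fun _ => 0) := by
  have hexp : ∀ ε, Continuous fun t => Real.exp (-(fastRate b c ε * (1 - t))) :=
    fun ε => by fun_prop
  refine .of_abs_sub_le (continuous_layerSolution b c) continuous_const
    (h := fun ε t => Real.exp (-(fastRate b c ε * (1 - t))) + (1 - layerSolution b c ε 1))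
    (fun ε => (hexp ε).add continuous_const) ?_ ?_
  · have hlim := (tendstoLinearly_integral_exp_layer (c := c) hb).add
      ((TendstoLinearly.const 1).sub (tendstoLinearly_layerSolution_one hb hc))
    rw [sub_self, add_zero] at hlim
    refine hlim.congr' (.of_forall fun ε => ?_)
    simp only [integral_add ((hexp ε).intervalIntegrable 0 1) intervalIntegrable_const,
      integral_const, sub_zero, one_smul]
  · filter_upwards [self_mem_nhdsWithin] with ε hε t ht
    rw [sub_zero]
    exact abs_layerSolution_le hb hc hε ht

theorem abs_outerSolution_sub_le (hb : 0 < b) (hc : 0 < c) (hε : 0 < ε) {κ t : ℝ} (hκ : 0 < κ)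
    (ht : t ∈ Icc (0 : ℝ) 1) :
    |outerSolution b c ε t - Real.sinh (κ * t) / κ| ≤
      (fastRate b c ε)⁻¹ * Real.cosh (slowRate b c ε) +
        |Real.sinh (slowRate b c ε) / slowRate b c ε - Real.sinh κ / κ| := by
  have hp : 0 < fastRate b c ε := fastRate_pos hb hε
  have hq : 0 < slowRate b c ε := slowRate_pos hb hc
  have hexp : Real.exp (-(fastRate b c ε * t)) ≤ 1 :=
    Real.exp_le_one_iff.2 (neg_nonpos.2 (mul_nonneg hp.le ht.1))
  have hcosh : Real.cosh (slowRate b c ε * t) ≤ Real.cosh (slowRate b c ε) := by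
    rw [Real.cosh_le_cosh, abs_mul]
    exact mul_le_of_le_one_right (abs_nonneg _) (by rw [abs_of_nonneg ht.1]; exact ht.2)
  rw [outerSolution_eq hb hε, add_sub_assoc]
  refine (abs_add_le _ _).trans (add_le_add ?_ (abs_sinh_mul_div_sub_le hq hκ ht))
  rw [abs_mul, abs_of_pos (inv_pos.2 hp)]
  gcongr
  rw [abs_le]
  constructor <;> linarith [Real.exp_pos (-(fastRate b c ε * t)),
    Real.one_le_cosh (slowRate b c ε * t)]

theorem tendstoLinearlyL1_outerSolution (hb : 0 < b) (hc : 0 < c) :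
    TendstoLinearlyL1 (outerSolution b c) (fun t => Real.sinh (√(c / b) * t) / √(c / b)) := by
  refine .of_abs_sub_le (continuous_outerSolution b c) (by fun_prop)
    (h := fun ε _ => (fastRate b c ε)⁻¹ * Real.cosh (slowRate b c ε) +
      |Real.sinh (slowRate b c ε) / slowRate b c ε - Real.sinh √(c / b) / √(c / b)|)
    (fun ε => continuous_const) ?_ ?_
  · have hlim := ((tendstoLinearly_inv_fastRate (c := c) hb).mul
      (tendstoLinearly_cosh_slowRate hb hc)).add
      (tendstoLinearly_sinh_div_slowRate hb hc).abs_sub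
    simpa only [zero_mul, add_zero, integral_const, sub_zero, one_smul] using hlim
  · filter_upwards [self_mem_nhdsWithin] with ε hε t ht
    exact abs_outerSolution_sub_le hb hc hε (Real.sqrt_pos.2 (div_pos hc hb)) ht

/-- The limit of `ε G_{xx}(1, ·)` as `ε → 0`. -/
noncomputable def bendingProfile (b c t : ℝ) : ℝ :=
  Real.sinh (√(c / b) * t) / (√b * Real.sinh √(c / b))

theorem tendstoLinearlyL1_bendingKernel (hb : 0 < b) (hc : 0 < c) :
    TendstoLinearlyL1 (bendingKernel b c) (bendingProfile b c) := by
  have : 0 < √(c / b) := Real.sqrt_pos.2 (div_pos hc hb)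
  have hW := tendstoLinearly_endWronskian hb hc
  have hW₀ := (endWronskian_limit_pos hb hc).ne'
  have hlim := ((tendstoLinearlyL1_outerSolution hb hc).const_mul
    ((tendstoLinearly_layerSolution_one hb hc).div hW hW₀)).sub
    ((tendstoLinearlyL1_layerSolution hb hc).const_mul
      ((tendstoLinearly_outerSolution_one hb hc).div hW hW₀))
  refine hlim.congr_limit fun t => ?_
  rw [bendingProfile]
  field_simp
  ring

theorem tendstoLinearlyL1_shearKernel (hb : 0 < b) (hc : 0 < c) :
    TendstoLinearlyL1 (shearKernel b c) (fun t => √b * bendingProfile b c t) := by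
  have : 0 < √(c / b) := Real.sqrt_pos.2 (div_pos hc hb)
  have hW := tendstoLinearly_endWronskian hb hc
  have hW₀ := (endWronskian_limit_pos hb hc).ne'
  have hlim := ((tendstoLinearlyL1_outerSolution hb hc).const_mul
    ((tendstoLinearly_deriv_layerSolution_one hb hc).div hW hW₀)).sub
    ((tendstoLinearlyL1_layerSolution hb hc).const_mul
      ((TendstoLinearly.id.mul (tendstoLinearly_deriv_outerSolution_one hb hc)).div hW hW₀))
  refine hlim.congr_limit fun t => ?_
  rw [bendingProfile]
  field_simp
  ring

theorem exists_abs_right_moment_sub_le (hb : 0 < b) (hc : 0 < c) :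
    ∃ C > 0, ∀ᶠ ε in 𝓝[>] 0, ∀ g₁ g₂ : ℝ → ℝ → ℝ,
      (∀ t ∈ Ioo 0 1, IsClampedGreen ε b c t (g₁ t) (g₂ t)) → ∀ φ, IsUnitWeight φ →
      |(∫ t in (0 : ℝ)..1, iteratedDeriv 2 (g₂ t) 1 * φ t) -
          (∫ t in (0 : ℝ)..1, bendingProfile b c t * φ t) / ε| ≤ C ∧
      |ε * (∫ t in (0 : ℝ)..1, iteratedDeriv 3 (g₂ t) 1 * φ t) -
          √b * ∫ t in (0 : ℝ)..1, iteratedDeriv 2 (g₂ t) 1 * φ t| ≤ C := by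
  obtain ⟨C₂, hC₂, hbound₂⟩ :=
    (tendstoLinearlyL1_bendingKernel hb hc).exists_forall_abs_integral_sub_le
  obtain ⟨C₃, -, hbound₃⟩ :=
    (tendstoLinearlyL1_shearKernel hb hc).exists_forall_abs_integral_sub_le
  refine ⟨max C₂ (C₃ + √b * C₂), lt_max_of_lt_left hC₂, ?_⟩
  have hW := (tendstoLinearly_endWronskian hb hc).tendsto.eventually_ne
    (endWronskian_limit_pos hb hc).ne'
  filter_upwards [hbound₂, hbound₃, hW, eventually_four_mul_sq_le (c := c) hb,
    self_mem_nhdsWithin] with ε hε₂ hε₃ hWε hsmall (hε : 0 < ε) g₁ g₂ hG φ hφ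
  obtain ⟨hbending, hshear⟩ := mul_integral_iteratedDeriv_eq_kernels hG hb hc hε.ne' hsmall hWε φ
  have hcancel : ∀ {x C : ℝ}, |ε * x| ≤ C * ε → |x| ≤ C := fun {x C} hx => by
    rw [abs_mul, abs_of_pos hε, mul_comm] at hx
    exact le_of_mul_le_mul_right hx hε
  have hbend := hε₂ φ hφ
  have hshear_sub := hε₃ φ hφ
  simp only [mul_assoc, integral_const_mul] at hshear_sub
  rw [← hbending] at hbend
  rw [← hshear] at hshear_sub
  constructor
  · refine (hcancel ?_).trans (le_max_left _ _)
    rwa [mul_sub, mul_div_cancel₀ _ hε.ne']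
  · refine (hcancel ?_).trans (le_max_right _ _)
    set P := ∫ t in (0 : ℝ)..1, bendingProfile b c t * φ t
    set J₂ := ∫ t in (0 : ℝ)..1, iteratedDeriv 2 (g₂ t) 1 * φ t
    set J₃ := ∫ t in (0 : ℝ)..1, iteratedDeriv 3 (g₂ t) 1 * φ t
    calc |ε * (ε * J₃ - √b * J₂)|
        = |(ε ^ 2 * J₃ - √b * P) - √b * (ε * J₂ - P)| := by congr 1; ring
      _ ≤ |ε ^ 2 * J₃ - √b * P| + √b * |ε * J₂ - P| := by
          refine (abs_sub _ _).trans_eq ?_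
          rw [abs_mul √b, abs_of_nonneg (Real.sqrt_nonneg b)]
      _ ≤ C₃ * ε + √b * (C₂ * ε) := by gcongr
      _ = (C₃ + √b * C₂) * ε := by ring

end Limits

section SinhMoments

open intervalIntegral Real

theorem integral_mul_pow_succ {F f : ℝ → ℝ} (hF : ∀ t, HasDerivAt F (f t) t) (hf : Continuous f)
    (k : ℕ) : ∫ t in (0 : ℝ)..1, f t * t ^ (k + 1) =
      F 1 - (k + 1) * ∫ t in (0 : ℝ)..1, F t * t ^ k := by
  have hpow : ∀ t : ℝ, HasDerivAt (fun t => t ^ (k + 1)) ((k + 1) * t ^ k) t := fun t => by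
    simpa using hasDerivAt_pow (k + 1) t
  have hparts := integral_mul_deriv_eq_deriv_mul (a := 0) (b := 1) (fun t _ => hpow t)
    (fun t _ => hF t) (Continuous.intervalIntegrable (by fun_prop) 0 1)
    (hf.intervalIntegrable 0 1)
  simp only [one_pow, one_mul, zero_pow (Nat.succ_ne_zero k), zero_mul, sub_zero, mul_assoc,
    integral_const_mul] at hparts
  simpa only [mul_comm] using hparts

theorem integral_sinh_mul_pow_succ (k : ℕ) : ∫ t in (0 : ℝ)..1, sinh t * t ^ (k + 1) =
    cosh 1 - (k + 1) * ∫ t in (0 : ℝ)..1, cosh t * t ^ k :=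
  integral_mul_pow_succ hasDerivAt_cosh continuous_sinh k

theorem integral_cosh_mul_pow_succ (k : ℕ) : ∫ t in (0 : ℝ)..1, cosh t * t ^ (k + 1) =
    sinh 1 - (k + 1) * ∫ t in (0 : ℝ)..1, sinh t * t ^ k :=
  integral_mul_pow_succ hasDerivAt_sinh continuous_cosh k

theorem integral_sinh : ∫ t in (0 : ℝ)..1, sinh t = cosh 1 - 1 := by
  rw [integral_eq_sub_of_hasDerivAt (fun t _ => hasDerivAt_cosh t)
    (continuous_sinh.intervalIntegrable 0 1), cosh_zero]

theorem integral_cosh : ∫ t in (0 : ℝ)..1, cosh t = sinh 1 := by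
  rw [integral_eq_sub_of_hasDerivAt (fun t _ => hasDerivAt_sinh t)
    (continuous_cosh.intervalIntegrable 0 1), sinh_zero, sub_zero]

theorem integral_bendingProfile_one_one_mul_pow (k : ℕ) :
    ∫ t in (0 : ℝ)..1, bendingProfile 1 1 t * t ^ k =
      (∫ t in (0 : ℝ)..1, sinh t * t ^ k) / sinh 1 := by
  simp only [bendingProfile, div_one, sqrt_one, one_mul, div_mul_eq_mul_div, integral_div]

theorem sinh_one_eq_div : sinh 1 = (exp 1 ^ 2 - 1) / (2 * exp 1) := by
  rw [sinh_eq, exp_neg]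
  field_simp

theorem cosh_one_eq_div : cosh 1 = (exp 1 ^ 2 + 1) / (2 * exp 1) := by
  rw [cosh_eq, exp_neg]
  field_simp

theorem exp_one_sq_sub_one_pos : 0 < exp 1 ^ 2 - 1 :=
  sub_pos.2 (one_lt_pow₀ (one_lt_exp_iff.2 one_pos) two_ne_zero)

theorem integral_bendingProfile_one_one :
    ∫ t in (0 : ℝ)..1, bendingProfile 1 1 t = (exp 1 - 1) / (exp 1 + 1) := by
  have hden := exp_one_sq_sub_one_pos.ne'
  have hsum : exp 1 + 1 ≠ 0 := by positivity
  have h := integral_bendingProfile_one_one_mul_pow 0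
  simp only [pow_zero, mul_one] at h
  rw [h, integral_sinh, sinh_one_eq_div, cosh_one_eq_div]
  field_simp
  ring

theorem integral_bendingProfile_one_one_mul :
    ∫ t in (0 : ℝ)..1, bendingProfile 1 1 t * t = 2 / (exp 1 ^ 2 - 1) := by
  have hden := exp_one_sq_sub_one_pos.ne'
  have h := integral_bendingProfile_one_one_mul_pow (0 + 1)
  rw [integral_sinh_mul_pow_succ] at h
  simp only [zero_add, pow_zero, pow_one, mul_one, integral_cosh] at h
  rw [h, sinh_one_eq_div, cosh_one_eq_div]
  field_simp
  push_cast
  ring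

theorem integral_bendingProfile_one_one_mul_sq :
    ∫ t in (0 : ℝ)..1, bendingProfile 1 1 t * t ^ 2 =
      (exp 1 ^ 2 - 4 * exp 1 + 5) / (exp 1 ^ 2 - 1) := by
  have hden := exp_one_sq_sub_one_pos.ne'
  simp only [integral_bendingProfile_one_one_mul_pow, integral_sinh_mul_pow_succ 1,
    integral_cosh_mul_pow_succ 0, pow_zero, mul_one, integral_sinh]
  rw [sinh_one_eq_div, cosh_one_eq_div]
  field_simp
  push_cast
  ring

theorem integral_bendingProfile_one_one_mul_cube :
    ∫ t in (0 : ℝ)..1, bendingProfile 1 1 t * t ^ 3 =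
      (16 - 2 * exp 1 ^ 2) / (exp 1 ^ 2 - 1) := by
  have hden := exp_one_sq_sub_one_pos.ne'
  simp only [integral_bendingProfile_one_one_mul_pow, integral_sinh_mul_pow_succ 2,
    integral_cosh_mul_pow_succ 1, integral_sinh_mul_pow_succ 0, pow_zero, mul_one, integral_cosh]
  rw [sinh_one_eq_div, cosh_one_eq_div]
  field_simp
  push_cast
  ring

end SinhMoments

theorem green_function_moment_asymptotics_general {b c : ℝ} (hb : 0 < b) (hc : 0 < c) :
    ∃ C > 0, ∀ᶠ ε in 𝓝[>] 0, ∀ g₁ g₂ : ℝ → ℝ → ℝ,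
      (∀ t ∈ Ioo 0 1, IsClampedGreen ε b c t (g₁ t) (g₂ t)) → ∀ φ, IsUnitWeight φ →
      |(∫ t in (0 : ℝ)..1, iteratedDeriv 2 (g₂ t) 1 * φ t) -
          (∫ t in (0 : ℝ)..1, bendingProfile b c t * φ t) / ε| ≤ C ∧
      |ε * (∫ t in (0 : ℝ)..1, iteratedDeriv 3 (g₂ t) 1 * φ t) -
          √b * ∫ t in (0 : ℝ)..1, iteratedDeriv 2 (g₂ t) 1 * φ t| ≤ C ∧
      |ε * (∫ t in (0 : ℝ)..1, iteratedDeriv 3 (g₁ t) 0 * φ t) +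
          √b * ∫ t in (0 : ℝ)..1, iteratedDeriv 2 (g₁ t) 0 * φ t| ≤ C := by
  obtain ⟨C, hC, hright⟩ := exists_abs_right_moment_sub_le hb hc
  refine ⟨C, hC, hright.mono fun ε hε g₁ g₂ hG φ hφ => ?_⟩
  obtain ⟨hbending, hshear⟩ := hε g₁ g₂ hG φ hφ
  refine ⟨hbending, hshear, ?_⟩
  have hreflected : ∀ t ∈ Ioo (0 : ℝ) 1, IsClampedGreen ε b c t
      (fun x => g₂ (1 - t) (1 - x)) (fun x => g₁ (1 - t) (1 - x)) := fun t ht => by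
    simpa only [sub_sub_cancel] using
      (hG (1 - t) ⟨sub_pos.2 ht.2, sub_lt_self 1 ht.1⟩).comp_one_sub
  have hleft := (hε _ _ hreflected _ hφ.comp_one_sub).2
  have hreflect : ∀ n : ℕ, (∫ t in (0 : ℝ)..1,
      iteratedDeriv n (fun x => g₁ (1 - t) (1 - x)) 1 * φ (1 - t)) =
        (-1) ^ n * ∫ t in (0 : ℝ)..1, iteratedDeriv n (g₁ t) 0 * φ t := fun n => by
    rw [intervalIntegral.integral_comp_sub_left
      (fun t => iteratedDeriv n (fun x => g₁ t (1 - x)) 1 * φ t),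
      ← intervalIntegral.integral_const_mul]
    simp [iteratedDeriv_comp_const_sub, mul_assoc]
  rw [hreflect, hreflect, ← abs_neg] at hleft
  refine hleft.trans_eq' (congrArg _ ?_)
  ring

/-- Moment asymptotics of the Green's function second derivatives (normalized
coefficients `b = c = 1`): as `ε → 0`,
`∫₀¹G_{xx}(1,t)dt = ((e-1)/(e+1))ε⁻¹ + O(1)`,
`∫₀¹G_{xx}(1,t)t dt = (2/(e²-1))ε⁻¹ + O(1)`,
`∫₀¹G_{xx}(1,t)t² dt = ((e²-4e+5)/(e²-1))ε⁻¹ + O(1)`,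
`∫₀¹G_{xx}(1,t)t³ dt = ((16-2e²)/(e²-1))ε⁻¹ + O(1)`, and for `k ∈ {0,1,2,3}`
`∫₀¹G_{xxx}(1,t)tᵏ dt = ε⁻¹(∫₀¹G_{xx}(1,t)tᵏ dt + O(1))` and
`∫₀¹G_{xxx}(0,t)tᵏ dt = -ε⁻¹(∫₀¹G_{xx}(0,t)tᵏ dt + O(1))`. -/
theorem green_function_moment_asymptotics :
    ∃ C > 0, ∃ ε₀ > 0, ∀ ε : ℝ, 0 < ε → ε ≤ ε₀ →
      ∀ G G₁ G₂ : ℝ → ℝ → ℝ,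
      (∀ t ∈ Ioo (0:ℝ) 1, ContDiff ℝ (⊤:ℕ∞) (fun x => G₁ x t)
        ∧ ContDiff ℝ (⊤:ℕ∞) (fun x => G₂ x t)) →
      (∀ t ∈ Ioo (0:ℝ) 1, GreenODE ε 1 1 (fun x => G₁ x t)
        ∧ GreenODE ε 1 1 (fun x => G₂ x t)) →
      (∀ t ∈ Ioo (0:ℝ) 1, G₁ 0 t = 0 ∧ deriv (fun x => G₁ x t) 0 = 0
        ∧ G₂ 1 t = 0 ∧ deriv (fun x => G₂ x t) 1 = 0) →
      (∀ t ∈ Ioo (0:ℝ) 1,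
        G₁ t t = G₂ t t ∧
        deriv (fun x => G₁ x t) t = deriv (fun x => G₂ x t) t ∧
        iteratedDeriv 2 (fun x => G₁ x t) t = iteratedDeriv 2 (fun x => G₂ x t) t ∧
        iteratedDeriv 3 (fun x => G₂ x t) t - iteratedDeriv 3 (fun x => G₁ x t) t
          = 1/ε^2) →
      (∀ x t : ℝ, G x t = if x < t then G₁ x t else G₂ x t) →
      |(∫ t in (0:ℝ)..1, iteratedDeriv 2 (fun x => G₂ x t) 1)
          - ((Real.exp 1 - 1)/(Real.exp 1 + 1)) / ε| ≤ C ∧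
      |(∫ t in (0:ℝ)..1, iteratedDeriv 2 (fun x => G₂ x t) 1 * t)
          - (2/((Real.exp 1)^2 - 1)) / ε| ≤ C ∧
      |(∫ t in (0:ℝ)..1, iteratedDeriv 2 (fun x => G₂ x t) 1 * t^2)
          - (((Real.exp 1)^2 - 4*Real.exp 1 + 5)/((Real.exp 1)^2 - 1)) / ε| ≤ C ∧
      |(∫ t in (0:ℝ)..1, iteratedDeriv 2 (fun x => G₂ x t) 1 * t^3)
          - ((16 - 2*(Real.exp 1)^2)/((Real.exp 1)^2 - 1)) / ε| ≤ C ∧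
      (∀ k : ℕ, k ≤ 3 →
        |ε * (∫ t in (0:ℝ)..1, iteratedDeriv 3 (fun x => G₂ x t) 1 * t^k)
            - ∫ t in (0:ℝ)..1, iteratedDeriv 2 (fun x => G₂ x t) 1 * t^k| ≤ C) ∧
      (∀ k : ℕ, k ≤ 3 →
        |ε * (∫ t in (0:ℝ)..1, iteratedDeriv 3 (fun x => G₁ x t) 0 * t^k)
            + ∫ t in (0:ℝ)..1, iteratedDeriv 2 (fun x => G₁ x t) 0 * t^k| ≤ C) := by
  obtain ⟨C, hC, hsmall⟩ := green_function_moment_asymptotics_general (c := 1) one_pos one_pos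
  obtain ⟨ε₀, hε₀, hle⟩ := mem_nhdsGT_iff_exists_Ioc_subset.1 hsmall
  refine ⟨C, hC, ε₀, hε₀, fun ε hε hεε₀ _ G₁ G₂ hsmooth hode hclamp hsource _ => ?_⟩
  have hG : ∀ t ∈ Ioo (0 : ℝ) 1, IsClampedGreen ε 1 1 t (G₁ · t) (G₂ · t) := fun t ht => by
    obtain ⟨hsm₁, hsm₂⟩ := hsmooth t ht
    obtain ⟨hode₁, hode₂⟩ := hode t ht
    obtain ⟨h₀, h₀', h₁, h₁'⟩ := hclamp t ht
    obtain ⟨hsrc, hsrc', hsrc'', hjump⟩ := hsource t ht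
    exact ⟨contDiff_infty.1 hsm₁ 4, contDiff_infty.1 hsm₂ 4, hode₁, hode₂, h₀, h₀', h₁, h₁',
      hsrc, hsrc', hsrc'', hjump⟩
  have hmoment := fun k : ℕ =>
    hle ⟨hε, hεε₀⟩ (fun t x => G₁ x t) (fun t x => G₂ x t) hG _ (isUnitWeight_pow k)
  simp only [Real.sqrt_one, one_mul] at hmoment
  refine ⟨?_, ?_, ?_, ?_, fun k _ => (hmoment k).2.1, fun k _ => (hmoment k).2.2⟩
  · simpa only [pow_zero, mul_one, integral_bendingProfile_one_one] using (hmoment 0).1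
  · simpa only [pow_one, integral_bendingProfile_one_one_mul] using (hmoment 1).1
  · simpa only [integral_bendingProfile_one_one_mul_sq] using (hmoment 2).1
  · simpa only [integral_bendingProfile_one_one_mul_cube] using (hmoment 3).1
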